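/- 994018226608901845 = 5 · 13 · 1733 · 12517 · 704988733 is a Carmichael number less than 10^18 having 704988733 as a prime factor, and 704988733 is the largest prime factor of any Carmichael number less than 10^18: every prime p dividing a Carmichael number N < 10^18 satisfies p ≤ 704988733. -/

import Mathlib

/-- A Carmichael number: a composite natural number `N` such that
`b ^ (N - 1) ≡ 1 [MOD N]` for every `b` coprime to `N`. -/
def IsCarmichael (N : ℕ) : Prop :=
  1 < N ∧ ¬ N.Prime ∧ ∀ b : ℕ, Nat.Coprime b N → b ^ (N - 1) ≡ 1 [MOD N]

/-!
Let `p` be a prime factor of a Carmichael number `N = p * m`. By Korselt's criterion `p - 1`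
divides `N - 1`, hence also `m - 1`. The values `m = 1` and `m = p` are excluded because `N` is
composite and squarefree, so either `m = 2 * p - 1` or `m ≥ 3 * p - 2`. The second alternative
forces `N > 10 ^ 18` once `p > 704988733`, and the first one leaves `p ≤ 707106781`. Each of the
remaining primes `p` is eliminated by a base `b ≤ 31` with `b ^ N ≢ b` modulo `N = p * (2 * p - 1)`.
-/

open scoped Nat

section Korselt

variable {N p : ℕ}

theorem prime_dvd_carmichael_sq (hp : p.Prime) : p ∣ ArithmeticFunction.carmichael (p ^ 2) := by
  obtain rfl | hp2 := eq_or_ne p 2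
  · rw [ArithmeticFunction.carmichael_two_pow_of_le_two le_rfl]
    simp
  · rw [ArithmeticFunction.carmichael_pow_of_prime_ne_two 2 hp hp2,
      Nat.totient_prime_pow hp two_pos]
    simp

namespace IsCarmichael

theorem carmichael_dvd_sub_one (hN : IsCarmichael N) :
    ArithmeticFunction.carmichael N ∣ N - 1 := by
  have : NeZero N := ⟨Nat.ne_zero_of_lt hN.1⟩
  rw [ArithmeticFunction.carmichael_eq_exponent']
  refine Monoid.exponent_dvd_of_forall_pow_eq_one fun u => Units.ext ?_
  have hu := (ZMod.natCast_eq_natCast_iff _ _ _).2 (hN.2.2 _ (ZMod.val_coe_unit_coprime u))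
  simpa using hu

theorem sub_one_dvd_sub_one (hN : IsCarmichael N) (hp : p.Prime) (hpN : p ∣ N) :
    p - 1 ∣ N - 1 := by
  have : Fact p.Prime := ⟨hp⟩
  have hcarm : ArithmeticFunction.carmichael p = p - 1 := by
    rw [ArithmeticFunction.carmichael_eq_exponent', IsCyclic.exponent_eq_card,
      Nat.card_eq_fintype_card, ZMod.card_units]
  exact hcarm ▸ (ArithmeticFunction.carmichael_dvd hpN).trans hN.carmichael_dvd_sub_one

theorem squarefree (hN : IsCarmichael N) : Squarefree N := by
  rw [Nat.squarefree_iff_prime_squarefree]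
  intro p hp hppN
  have hpN : p ∣ N := (Dvd.intro p rfl).trans hppN
  have hpN' : p ∣ N - 1 := (prime_dvd_carmichael_sq hp).trans <|
    (ArithmeticFunction.carmichael_dvd (sq p ▸ hppN)).trans hN.carmichael_dvd_sub_one
  exact hp.one_lt.ne' <| Nat.dvd_one.1 <| (Nat.dvd_sub_iff_right hN.1.le hpN).1 hpN'

end IsCarmichael

theorem pow_modEq_self_of_sub_one_dvd (hp : p.Prime) (hN : N ≠ 0) (h : p - 1 ∣ N - 1) (b : ℕ) :
    b ^ N ≡ b [MOD p] := by
  obtain hb | hb := em (p ∣ b)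
  · exact (Nat.modEq_zero_iff_dvd.2 (dvd_pow hb hN)).trans (Nat.modEq_zero_iff_dvd.2 hb).symm
  · obtain ⟨k, hk⟩ := h
    have hfermat : b ^ (p - 1) ≡ 1 [MOD p] :=
      Nat.ModEq.pow_card_sub_one_eq_one hp (hp.coprime_iff_not_dvd.2 hb).symm
    calc b ^ N = (b ^ (p - 1)) ^ k * b := by
          rw [← pow_mul, ← hk, pow_sub_one_mul hN]
      _ ≡ 1 ^ k * b [MOD p] := (hfermat.pow k).mul_right b
      _ = b := by simp

theorem modEq_of_squarefree {a b : ℕ} (hN : Squarefree N)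
    (h : ∀ p, p.Prime → p ∣ N → a ≡ b [MOD p]) : a ≡ b [MOD N] := by
  wlog hab : a ≤ b generalizing a b
  · exact (this (fun p hp hpN => (h p hp hpN).symm) (le_of_not_ge hab)).symm
  rw [Nat.modEq_iff_dvd' hab, ← Nat.prod_primeFactors_of_squarefree hN]
  refine Finset.prod_primes_dvd _ (fun p hp => (Nat.prime_of_mem_primeFactors hp).prime)
    fun p hp => (Nat.modEq_iff_dvd' hab).1 ?_
  exact h p (Nat.prime_of_mem_primeFactors hp) (Nat.dvd_of_mem_primeFactors hp)

theorem pow_modEq_self_of_korselt (hN : Squarefree N)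
    (h : ∀ p, p.Prime → p ∣ N → p - 1 ∣ N - 1) (b : ℕ) : b ^ N ≡ b [MOD N] :=
  modEq_of_squarefree hN fun p hp hpN => pow_modEq_self_of_sub_one_dvd hp hN.ne_zero (h p hp hpN) b

theorem isCarmichael_iff_korselt :
    IsCarmichael N ↔
      1 < N ∧ ¬ N.Prime ∧ Squarefree N ∧ ∀ p, p.Prime → p ∣ N → p - 1 ∣ N - 1 := by
  refine ⟨fun hN => ⟨hN.1, hN.2.1, hN.squarefree, fun p => hN.sub_one_dvd_sub_one⟩, ?_⟩
  rintro ⟨hone, hprime, hsq, hdvd⟩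
  refine ⟨hone, hprime, fun b hb => Nat.ModEq.cancel_right_of_coprime hb.symm ?_⟩
  simpa [pow_sub_one_mul hsq.ne_zero] using pow_modEq_self_of_korselt hsq hdvd b

theorem isCarmichael_list_prod {l : List ℕ} (hprime : ∀ p ∈ l, p.Prime) (hnodup : l.Nodup)
    (hlength : 1 < l.length) (hdvd : ∀ p ∈ l, p - 1 ∣ l.prod - 1) : IsCarmichael l.prod := by
  have hfactors : l.Perm l.prod.primeFactorsList := Nat.primeFactorsList_unique rfl hprime
  have hne : l.prod ≠ 0 := List.prod_ne_zero fun h => Nat.not_prime_zero (hprime 0 h)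
  rw [hfactors.length_eq] at hlength
  refine isCarmichael_iff_korselt.2 ⟨?_, ?_, ?_, fun p hp hpl => hdvd p ?_⟩
  · exact lt_of_le_of_ne (Nat.one_le_iff_ne_zero.2 hne) fun h => by simp [← h] at hlength
  · exact fun h => by simp [Nat.primeFactorsList_prime h] at hlength
  · exact (Nat.squarefree_iff_nodup_primeFactorsList hne).2 (hfactors.nodup hnodup)
  · exact hfactors.mem_iff.2 ((Nat.mem_primeFactorsList hne).2 ⟨hp, hpl⟩)

end Korselt

namespace IsCarmichael

variable {N p : ℕ}

theorem pow_modEq_self (hN : IsCarmichael N) (b : ℕ) : b ^ N ≡ b [MOD N] :=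
  pow_modEq_self_of_korselt hN.squarefree (fun _ => hN.sub_one_dvd_sub_one) b

theorem eq_mul_two_mul_sub_one (hN : IsCarmichael N) (hp : p.Prime) (hpN : p ∣ N)
    (hlt : N < p * (3 * p - 2)) : N = p * (2 * p - 1) := by
  obtain ⟨m, rfl⟩ := hpN
  have hm : 0 < m := Nat.pos_of_mul_pos_left (Nat.zero_lt_of_lt hN.1)
  have hdvd : p - 1 ∣ m - 1 := by
    have hsum : p * m - 1 = (p - 1) * m + (m - 1) := by
      zify [hp.one_le, hm, hN.1.le]
      ring
    exact (Nat.dvd_add_right (dvd_mul_right _ _)).1 (hsum ▸ hN.sub_one_dvd_sub_one hp ⟨m, rfl⟩)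
  obtain ⟨k, hk⟩ := hdvd
  have hk3 : k < 3 := by
    have hm3 : m < 3 * p - 2 := lt_of_mul_lt_mul_left hlt p.zero_le
    exact lt_of_mul_lt_mul_left (show (p - 1) * k < (p - 1) * 3 by lia) (p - 1).zero_le
  interval_cases k
  · exact absurd (by simpa [show m = 1 by lia] using hp) hN.2.1
  · have hmp : m = p := by have := hp.one_le; lia
    exact absurd (hN.squarefree p (by rw [hmp])) hp.prime.not_isUnit
  · congr 1
    lia

end IsCarmichael

section Search

/-- Bounded universal quantification over `i < n`. It is defined by the bare recursor, as the
decidability instances of `∀ i < n, _` take quadratic time in the kernel. -/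
def forallBelow (n : ℕ) (f : ℕ → Bool) : Bool :=
  n.rec true fun i ih => f i && ih

theorem forallBelow_eq_true_iff {n : ℕ} {f : ℕ → Bool} :
    forallBelow n f = true ↔ ∀ i < n, f i = true := by
  induction n with
  | zero => simp [forallBelow]
  | succ n ih => rw [Nat.forall_lt_succ_right, ← ih, ← Bool.and_eq_true, Bool.and_comm]; rfl

/-- Universal quantification over the `p` coprime to `m` with `a ≤ p < a + m * n`, done residue
class by residue class so that coprimality is tested only `m` times. -/
def forallCoprime (a m n : ℕ) (f : ℕ → Bool) : Bool :=
  forallBelow m fun r => !((a + r).gcd m).beq 1 || forallBelow n fun k => f (a + r + m * k)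

theorem apply_of_forallCoprime {a m n p : ℕ} {f : ℕ → Bool} (h : forallCoprime a m n f = true)
    (hap : a ≤ p) (hpa : p < a + m * n) (hpm : p.Coprime m) : f p = true := by
  obtain ⟨i, rfl⟩ := Nat.exists_eq_add_of_le hap
  have hi : i < m * n := Nat.lt_of_add_lt_add_left hpa
  have hm : 0 < m := Nat.pos_of_mul_pos_right (Nat.zero_lt_of_lt hi)
  have hsplit : a + i = a + i % m + m * (i / m) := by rw [add_assoc, Nat.mod_add_div]
  have hcop : (a + i % m).gcd m = 1 := by
    rwa [hsplit, Nat.coprime_add_mul_left_left] at hpm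
  have hr := forallBelow_eq_true_iff.1 h (i % m) (Nat.mod_lt i hm)
  have hclass : forallBelow n (fun k => f (a + i % m + m * k)) = true := by
    simpa [hcop] using hr
  rw [hsplit]
  exact forallBelow_eq_true_iff.1 hclass (i / m) (Nat.div_lt_of_lt_mul hi)

/-- `b ^ e % n`, computed through `k` base-256 digits of `e`. The operations are spelled out because
the kernel would otherwise spend most of its time unfolding the instances behind the notation. -/
def powMod (b n k : ℕ) : ℕ → ℕ :=
  k.rec (fun e => (b.pow e).mod n) fun _ ih e =>
    (((ih (e.div 256)).pow 256).mul (b.pow (e.mod 256))).mod n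

theorem powMod_eq (b n k e : ℕ) : powMod b n k e = b ^ e % n := by
  induction k generalizing e with
  | zero => rfl
  | succ k ih =>
    calc powMod b n (k + 1) e = powMod b n k (e / 256) ^ 256 * b ^ (e % 256) % n := rfl
      _ = (b ^ (e / 256)) ^ 256 * b ^ (e % 256) % n := by
        rw [ih, Nat.mul_mod, ← Nat.pow_mod, ← Nat.mul_mod]
      _ = b ^ e % n := by rw [← pow_mul, ← pow_add, mul_comm, Nat.div_add_mod]

/-- The Fermat test for `N` to base `b`, in the form `b ^ N % N = b` valid for `b < N`. -/
def fermatTest (N b : ℕ) : Bool :=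
  (powMod b N 6 N).beq b

theorem fermatTest_of_isCarmichael {N b : ℕ} (hN : IsCarmichael N) (hb : b < N) :
    fermatTest N b = true := by
  rw [fermatTest, powMod_eq, Nat.beq_eq, hN.pow_modEq_self b, Nat.mod_eq_of_lt hb]

/-- The Fermat tests for `N` to the prime bases up to `31`. In the search below base `2` rejects
nearly every `N` and is therefore tried first, outside of the list. -/
def smallFermatTests (N : ℕ) : Bool :=
  fermatTest N 2 && [3, 5, 7, 11, 13, 17, 19, 23, 29, 31].all (fermatTest N)

theorem smallFermatTests_of_isCarmichael {N : ℕ} (hN : IsCarmichael N) (hlt : 31 < N) :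
    smallFermatTests N = true := by
  have htest : ∀ b ≤ 31, fermatTest N b = true := fun b hb =>
    fermatTest_of_isCarmichael hN (hb.trans_lt hlt)
  simp [smallFermatTests, htest]

/-- Whether trial division up to `1000` and Fermat tests leave open that `p` is a prime for which
`p * (2 * p - 1)` is a Carmichael number. -/
def survives (p : ℕ) : Bool :=
  (p.gcd 1000 !).beq 1 && smallFermatTests (p * (2 * p - 1))

theorem survives_of_isCarmichael {p : ℕ} (hp : p.Prime) (hp1000 : 1000 < p)
    (hN : IsCarmichael (p * (2 * p - 1))) : survives p = true := by
  have hcop : p.gcd 1000 ! = 1 := (Nat.coprime_factorial_iff hp.ne_one).2 (by rwa [hp.minFac_eq])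
  have hlt : 31 < p * (2 * p - 1) := by nlinarith [show 1 ≤ 2 * p - 1 by lia]
  simp [survives, hcop, smallFermatTests_of_isCarmichael hN hlt]

-- `2310 = 2 * 3 * 5 * 7 * 11`, and `917` periods of this wheel reach `707106781`, the largest `p`
-- with `p * (2 * p - 1) < 10 ^ 18`.
theorem forallCoprime_not_survives :
    forallCoprime 704988734 2310 917 (fun p => !survives p) = true := by
  decide +kernel

end Search

theorem not_isCarmichael_mul_two_mul_sub_one_of_mem_Ioc {p : ℕ} (hp : p.Prime)
    (hmem : p ∈ Set.Ioc 704988733 707106781) : ¬ IsCarmichael (p * (2 * p - 1)) := by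
  intro hN
  obtain ⟨hlow, hhigh⟩ := hmem
  have hcop : p.Coprime 2310 := Nat.coprime_of_lt_prime (by simp) (by lia) hp
  have hfails := apply_of_forallCoprime forallCoprime_not_survives hlow (by lia) hcop
  simp [survives_of_isCarmichael hp (by lia) hN] at hfails

theorem natCast_pow_eq_one_iff_powMod (b n k e : ℕ) :
    (b : ZMod n) ^ e = 1 ↔ powMod b n k e = 1 % n := by
  rw [powMod_eq]
  exact_mod_cast ZMod.natCast_eq_natCast_iff' (b ^ e) 1 n

theorem prime_704988733 : Nat.Prime 704988733 := by
  refine lucas_primality _ ((2 : ℕ) : ZMod _) ?_ fun q hq hqp => ?_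
  · rw [natCast_pow_eq_one_iff_powMod _ _ 4]
    decide +kernel
  · have hmem : q ∈ [2, 2, 3, 7, 23, 31, 79, 149] := by
      refine mem_list_primes_of_dvd_prod hq.prime ?_ (by simpa using hqp)
      simp only [← Nat.prime_iff]
      norm_num
    have hpow : ∀ q ∈ [2, 2, 3, 7, 23, 31, 79, 149],
        powMod 2 704988733 4 ((704988733 - 1) / q) ≠ 1 % 704988733 := by
      decide +kernel
    rw [Ne, natCast_pow_eq_one_iff_powMod _ _ 4]
    exact hpow q hmem

theorem isCarmichael_994018226608901845 : IsCarmichael 994018226608901845 := by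
  have hprime : ∀ p ∈ [5, 13, 1733, 12517, 704988733], p.Prime := by
    simp only [List.forall_mem_cons]
    exact ⟨by norm_num, by norm_num, by norm_num, by norm_num, prime_704988733, by simp⟩
  simpa using isCarmichael_list_prod hprime (by simp) (by simp) (by norm_num)

theorem carmichael_largest_prime_factor :
    (994018226608901845 : ℕ) = 5 * 13 * 1733 * 12517 * 704988733 ∧
      IsCarmichael 994018226608901845 ∧ (994018226608901845 : ℕ) < 10 ^ 18 ∧
      Nat.Prime 704988733 ∧ (704988733 : ℕ) ∣ 994018226608901845 ∧
      ∀ N p : ℕ, IsCarmichael N → N < 10 ^ 18 → p.Prime → p ∣ N →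
        p ≤ 704988733 := by
  refine ⟨by norm_num, isCarmichael_994018226608901845, by norm_num, prime_704988733,
    by norm_num, fun N p hN hNlt hp hpN => ?_⟩
  by_contra! hlow
  have hNp : N = p * (2 * p - 1) := hN.eq_mul_two_mul_sub_one hp hpN <|
    calc N < 10 ^ 18 := hNlt
      _ ≤ 704988734 * (3 * 704988734 - 2) := by norm_num
      _ ≤ p * (3 * p - 2) := by gcongr <;> exact hlow
  have hhigh : p ≤ 707106781 := by
    by_contra! hp'
    have : 707106782 * (2 * 707106782 - 1) ≤ p * (2 * p - 1) := by gcongr <;> exact hp'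
    lia
  exact not_isCarmichael_mul_two_mul_sub_one_of_mem_Ioc hp ⟨hlow, hhigh⟩ (hNp ▸ hN)
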